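/- arXiv:1606.08085 — 4 statements merged into one kernel-verified Lean document; each statement's English description precedes it below -/
import Mathlib

section
/- Let A be the adjacency matrix of an undirected circulant graph on N vertices with generating set S, positive weights (d_s)_{s∈S}, degree d per node and adjacency bandwidth B̃, let k ≥ 1, set B = k·B̃ (the bandwidth of the order-2k HGSWT filters), and assume 2B < N. Let H_LP = (1/2^k)(I + A/d)^k and H_HP = (1/2^k)(I − A/d)^k, and let W′ ∈ ℝ^{N×N} be the matrix realizing the 'minimum' downsampling pattern: row 0 of W′ is row 0 of H_LP (a single node retains the low-pass component) and row i of W′ is row i of H_HP for 1 ≤ i ≤ N−1. Then for every polynomial p of degree at most 2k−1, the graph signal x with x_j = p(j) has a representation W′x with at most K = 2B nonzero entries. -/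
/-!
At a vertex whose distance from the cut between `N - 1` and `0` is at least the bandwidth, the
Laplacian of the circulant graph takes no edge across the cut, so there it acts on samples of a
polynomial as a weighted sum of symmetric second differences. These lower the degree by two, and
each application moves the cut's region of influence inwards by one bandwidth. Hence the `k`-th
power annihilates polynomials of degree less than `2k` outside the `B` vertices on either side of
the cut. Vertex `0`, the one carrying the low-pass row, is among these `2B` vertices.
-/

/-- The symmetric circulant adjacency matrix of the circulant graph on `N` vertices
with generating set `S` and weights `w`. -/
noncomputable def circAdj (N : ℕ) (S : Finset ℕ) (w : ℕ → ℝ) :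
    Matrix (Fin N) (Fin N) ℝ :=
  fun i j => ∑ s ∈ S,
    if ((i : ℤ) - (j : ℤ)) % (N : ℤ) = (s : ℤ) % (N : ℤ) ∨
       ((i : ℤ) - (j : ℤ)) % (N : ℤ) = (-(s : ℤ)) % (N : ℤ)
    then w s else 0

open Finset Matrix Polynomial

section LineLaplacian

variable {R : Type*} [CommRing R]

lemma degree_taylor_sub_self_lt (r : R) {p : R[X]} (hp : p ≠ 0) :
    (taylor r p - p).degree < p.degree :=
  degree_sub_lt_right (degree_taylor p r) hp (leadingCoeff_taylor r p)

lemma taylor_sub_self_mem_degreeLT (r : R) {p : R[X]} {n : ℕ} (hp : p ∈ degreeLT R (n + 1)) :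
    taylor r p - p ∈ degreeLT R n := by
  rcases eq_or_ne p 0 with rfl | hp0
  · simp
  · have natDegree_lt := (natDegree_lt_iff_degree_lt hp0).2 (mem_degreeLT.1 hp)
    exact mem_degreeLT.2 ((degree_taylor_sub_self_lt r hp0).trans_le
      (degree_le_of_natDegree_le (Nat.le_of_lt_succ natDegree_lt)))

lemma second_difference_mem_degreeLT (r : R) {p : R[X]} {n : ℕ}
    (hp : p ∈ degreeLT R (n + 2)) :
    2 • p - taylor r p - taylor (-r) p ∈ degreeLT R n := by
  have shift_mem : taylor (-r) p ∈ degreeLT R (n + 2) := by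
    rwa [mem_degreeLT, degree_taylor, ← mem_degreeLT]
  have eq_neg_iterated_difference : 2 • p - taylor r p - taylor (-r) p =
      -(taylor r (taylor r (taylor (-r) p) - taylor (-r) p) -
        (taylor r (taylor (-r) p) - taylor (-r) p)) := by
    have taylor_cancel : taylor r (taylor (-r) p) = p := by simp [taylor_taylor]
    rw [taylor_cancel, map_sub, taylor_cancel]
    abel
  rw [eq_neg_iterated_difference]
  exact neg_mem (taylor_sub_self_mem_degreeLT r (taylor_sub_self_mem_degreeLT r shift_mem))

/-- The weighted graph Laplacian, acting on polynomials, of the Cayley graph of `ℤ` with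
generators `S` and weights `w`, that is, of the circulant graph unrolled onto a line. -/
noncomputable def lineLaplacian (S : Finset ℕ) (w : ℕ → R) (p : R[X]) : R[X] :=
  ∑ s ∈ S, w s • (2 • p - taylor (s : R) p - taylor (-(s : R)) p)

variable (S : Finset ℕ) (w : ℕ → R)

lemma lineLaplacian_mem_degreeLT {p : R[X]} {n : ℕ} (hp : p ∈ degreeLT R (n + 2)) :
    lineLaplacian S w p ∈ degreeLT R n :=
  sum_mem fun _ _ => Submodule.smul_mem _ _ (second_difference_mem_degreeLT _ hp)

lemma lineLaplacian_iterate_eq_zero {p : R[X]} {k : ℕ} (hp : p ∈ degreeLT R (2 * k)) :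
    (lineLaplacian S w)^[k] p = 0 := by
  induction k generalizing p with
  | zero => simpa [mem_degreeLT] using hp
  | succ k ih =>
    rw [Function.iterate_succ_apply]
    exact ih (lineLaplacian_mem_degreeLT S w hp)

lemma eval_lineLaplacian (p : R[X]) (t : R) :
    (lineLaplacian S w p).eval t =
      ∑ s ∈ S, w s * (2 * p.eval t - p.eval (t + s) - p.eval (t - s)) := by
  simp [lineLaplacian, eval_finsetSum, taylor_eval, ← sub_eq_add_neg]

end LineLaplacian

lemma sum_ite_sub_eq_or_sub_eq_neg {M : Type*} [AddCommMonoid M] {N i s : ℕ} (hs : 0 < s)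
    (hsi : s ≤ i) (hisN : i + s < N) (f : ℤ → M) :
    ∑ j : Fin N, (if (i : ℤ) - j = s ∨ (i : ℤ) - j = -s then f j else 0) =
      f (i + s) + f (i - s) := by
  let right : Fin N := ⟨i + s, hisN⟩
  let left : Fin N := ⟨i - s, by omega⟩
  have right_ne_left : right ≠ left := by
    rw [ne_eq, Fin.mk.injEq]
    omega
  have neighbours : ({j : Fin N | (i : ℤ) - j = s ∨ (i : ℤ) - j = -s} : Finset (Fin N)) =
      {right, left} := by
    ext j
    simp only [mem_filter_univ, mem_insert, mem_singleton, Fin.ext_iff, right, left]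
    omega
  rw [← sum_filter, neighbours, sum_pair right_ne_left]
  simp [right, left, hsi]

section Circulant

variable {N : ℕ} {S : Finset ℕ} (w : ℕ → ℝ) {b : ℕ}

lemma circAdj_apply_of_interior (hle : ∀ s ∈ S, s ≤ b) {i : Fin N} (hbi : b ≤ i)
    (hibN : i + b < N) (j : Fin N) :
    circAdj N S w i j =
      ∑ s ∈ S, if (i : ℤ) - j = s ∨ (i : ℤ) - j = -s then w s else 0 := by
  have emod_eq_iff (t : ℤ) (ht : |(i : ℤ) - j - t| < N) :
      ((i : ℤ) - j) % N = t % N ↔ (i : ℤ) - j = t :=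
    ⟨fun h => sub_eq_zero.1 (Int.eq_zero_of_abs_lt_dvd (Int.ModEq.dvd h.symm) ht),
      fun h => by rw [h]⟩
  refine sum_congr rfl fun s hs => ?_
  have hsb := hle s hs
  simp only [emod_eq_iff s (by rw [abs_lt]; omega), emod_eq_iff (-s) (by rw [abs_lt]; omega)]

lemma circAdj_mulVec_apply_of_interior (hpos : ∀ s ∈ S, 0 < s) (hle : ∀ s ∈ S, s ≤ b)
    {i : Fin N} (hbi : b ≤ i) (hibN : i + b < N) {y : Fin N → ℝ} {f : ℤ → ℝ}
    (hy : ∀ j : Fin N, |(i : ℤ) - j| ≤ b → y j = f j) :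
    (circAdj N S w *ᵥ y) i = ∑ s ∈ S, w s * (f (i + s) + f (i - s)) := by
  simp only [mulVec, dotProduct, circAdj_apply_of_interior w hle hbi hibN, sum_mul]
  rw [sum_comm]
  refine sum_congr rfl fun s hs => ?_
  have hsb := hle s hs
  rw [← sum_ite_sub_eq_or_sub_eq_neg (hpos s hs) (hsb.trans hbi)
    ((Nat.add_le_add_left hsb _).trans_lt hibN) f, mul_sum]
  refine sum_congr rfl fun j _ => ?_
  split_ifs with hj
  · rw [hy j (by rw [abs_le]; omega)]
  · simp

/-- The graph Laplacian `d I - A` of the weighted circulant graph. Unlike the normalized Laplacian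
`I - A / d` of the high-pass filter, it makes sense when the degree `d` vanishes. -/
noncomputable def circLaplacian (N : ℕ) (S : Finset ℕ) (w : ℕ → ℝ) : Matrix (Fin N) (Fin N) ℝ :=
  (∑ s ∈ S, 2 * w s) • 1 - circAdj N S w

lemma one_sub_inv_smul_circAdj (hd : ∑ s ∈ S, 2 * w s ≠ 0) :
    1 - (∑ s ∈ S, 2 * w s)⁻¹ • circAdj N S w =
      (∑ s ∈ S, 2 * w s)⁻¹ • circLaplacian N S w := by
  rw [circLaplacian, smul_sub, inv_smul_smul₀ hd]

lemma circLaplacian_mulVec_apply_of_interior (hpos : ∀ s ∈ S, 0 < s) (hle : ∀ s ∈ S, s ≤ b)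
    {i : Fin N} (hbi : b ≤ i) (hibN : i + b < N) {y : Fin N → ℝ} {p : ℝ[X]}
    (hy : ∀ j : Fin N, |(i : ℤ) - j| ≤ b → y j = p.eval (j : ℝ)) :
    (circLaplacian N S w *ᵥ y) i = (lineLaplacian S w p).eval (i : ℝ) := by
  have adjacency := circAdj_mulVec_apply_of_interior w hpos hle hbi hibN
    (f := fun t => p.eval (t : ℝ)) (by simpa using hy)
  rw [circLaplacian, sub_mulVec, smul_mulVec, one_mulVec, Pi.sub_apply, Pi.smul_apply,
    smul_eq_mul, adjacency, hy i (by simp), eval_lineLaplacian, sum_mul, ← sum_sub_distrib]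
  refine sum_congr rfl fun s _ => ?_
  push_cast
  ring

lemma circLaplacian_pow_mulVec_apply_of_interior (hpos : ∀ s ∈ S, 0 < s) (hle : ∀ s ∈ S, s ≤ b)
    {x : Fin N → ℝ} {p : ℝ[X]} (hx : ∀ j : Fin N, x j = p.eval (j : ℝ)) {m : ℕ} {i : Fin N}
    (hmi : m * b ≤ i) (himN : i + m * b < N) :
    (circLaplacian N S w ^ m *ᵥ x) i = ((lineLaplacian S w)^[m] p).eval (i : ℝ) := by
  induction m generalizing i with
  | zero => simpa using hx i
  | succ m ih =>
    rw [add_one_mul] at hmi himN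
    rw [pow_succ', ← mulVec_mulVec, Function.iterate_succ_apply']
    refine circLaplacian_mulVec_apply_of_interior w hpos hle (by omega) (by omega) fun j hj => ?_
    rw [abs_le] at hj
    exact ih (by omega) (by omega)

lemma circLaplacian_pow_mulVec_apply_eq_zero (hpos : ∀ s ∈ S, 0 < s) (hle : ∀ s ∈ S, s ≤ b)
    {k : ℕ} {p : ℝ[X]} (hp : p ∈ degreeLT ℝ (2 * k)) {x : Fin N → ℝ}
    (hx : ∀ j : Fin N, x j = p.eval (j : ℝ)) {i : Fin N} (hki : k * b ≤ i)
    (hikN : i + k * b < N) :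
    (circLaplacian N S w ^ k *ᵥ x) i = 0 := by
  rw [circLaplacian_pow_mulVec_apply_of_interior w hpos hle hx hki hikN,
    lineLaplacian_iterate_eq_zero S w hp, eval_zero]

end Circulant

lemma card_filter_ne_zero_le_of_interior {M : Type*} [Zero M] [DecidableEq M] {N B : ℕ}
    {y : Fin N → M} (hy : ∀ i : Fin N, B ≤ i → i + B < N → y i = 0) :
    #{i | y i ≠ 0} ≤ 2 * B := by
  have support_subset : ({i | y i ≠ 0} : Finset (Fin N)).map Fin.valEmbedding ⊆
      range B ∪ Ico (N - B) N := by
    intro a ha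
    obtain ⟨i, hi, rfl⟩ := mem_map.1 ha
    have not_interior := mt (fun h : B ≤ i ∧ i + B < N => hy i h.1 h.2) (mem_filter.1 hi).2
    simp only [mem_union, mem_range, mem_Ico, Fin.valEmbedding_apply]
    omega
  calc #{i | y i ≠ 0}
      = #(({i | y i ≠ 0} : Finset (Fin N)).map Fin.valEmbedding) := (card_map _).symm
    _ ≤ #(range B ∪ Ico (N - B) N) := card_le_card support_subset
    _ ≤ #(range B) + #(Ico (N - B) N) := card_union_le _ _
    _ ≤ 2 * B := by rw [card_range, Nat.card_Ico]; omega

theorem hgswt_minimum_sampling_sparsity_general {N : ℕ} {S : Finset ℕ} {w : ℕ → ℝ}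
    (hpos : ∀ s ∈ S, 0 < s) (hd : ∑ s ∈ S, 2 * w s ≠ 0) {b : ℕ} (hle : ∀ s ∈ S, s ≤ b) {k : ℕ}
    {W : Matrix (Fin N) (Fin N) ℝ}
    (hW : ∀ i : Fin N, k * b ≤ i → i + k * b < N →
      W i = ((1 / 2 ^ k : ℝ) • (1 - (∑ s ∈ S, 2 * w s)⁻¹ • circAdj N S w) ^ k) i)
    {p : ℝ[X]} (hp : p.natDegree < 2 * k) {x : Fin N → ℝ}
    (hx : ∀ j : Fin N, x j = p.eval (j : ℝ)) :
    #{i | (W *ᵥ x) i ≠ 0} ≤ 2 * (k * b) := by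
  have hp_mem : p ∈ degreeLT ℝ (2 * k) :=
    mem_degreeLT.2 (degree_le_natDegree.trans_lt (Nat.cast_lt.2 hp))
  refine card_filter_ne_zero_le_of_interior fun i hki hikN => ?_
  calc (W *ᵥ x) i
      = (((1 / 2 ^ k : ℝ) • (1 - (∑ s ∈ S, 2 * w s)⁻¹ • circAdj N S w) ^ k) *ᵥ x) i :=
        congrArg (· ⬝ᵥ x) (hW i hki hikN)
    _ = (1 / 2 ^ k) * ((∑ s ∈ S, 2 * w s)⁻¹ ^ k * (circLaplacian N S w ^ k *ᵥ x) i) := by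
        rw [one_sub_inv_smul_circAdj w hd, _root_.smul_pow, smul_mulVec, smul_mulVec,
          Pi.smul_apply, Pi.smul_apply, smul_eq_mul, smul_eq_mul]
    _ = 0 := by
        rw [circLaplacian_pow_mulVec_apply_eq_zero w hpos hle hp_mem hx hki hikN, mul_zero,
          mul_zero]

/-- with the `minimum` downsampling pattern (one low-pass row, all other
rows high-pass), the HGSWT representation of a polynomial graph signal of degree at most
`2k−1` has at most `K = 2B = 2kB̃` nonzero entries. -/
theorem hgswt_minimum_sampling_sparsity
    (N : ℕ) (S : Finset ℕ) (w : ℕ → ℝ)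
    (hS : ∀ s ∈ S, 1 ≤ s ∧ 2 * s ≤ N - 1)
    (hw : ∀ s ∈ S, 0 < w s) (hSne : S.Nonempty)
    (Bt : ℕ) (hBS : Bt ∈ S) (hBmax : ∀ s ∈ S, s ≤ Bt)
    (k : ℕ) (hk : 1 ≤ k) (hB : 2 * (k * Bt) < N)
    (A : Matrix (Fin N) (Fin N) ℝ) (hA : A = circAdj N S w)
    (HLP HHP : Matrix (Fin N) (Fin N) ℝ)
    (hHLP : HLP = (1 / 2 ^ k : ℝ) •
      ((1 : Matrix (Fin N) (Fin N) ℝ) + (∑ s ∈ S, 2 * w s)⁻¹ • A) ^ k)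
    (hHHP : HHP = (1 / 2 ^ k : ℝ) •
      ((1 : Matrix (Fin N) (Fin N) ℝ) - (∑ s ∈ S, 2 * w s)⁻¹ • A) ^ k)
    (W' : Matrix (Fin N) (Fin N) ℝ)
    (hW' : ∀ a b : Fin N, W' a b = if (a : ℕ) = 0 then HLP a b else HHP a b)
    (p : Polynomial ℝ) (hp : p.natDegree ≤ 2 * k - 1)
    (x : Fin N → ℝ) (hx : ∀ j : Fin N, x j = p.eval ((j : ℕ) : ℝ)) :
    (Finset.univ.filter fun a => W'.mulVec x a ≠ 0).card ≤ 2 * (k * Bt) := by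
  subst hA hHLP hHHP
  have hd : ∑ s ∈ S, 2 * w s ≠ 0 := (sum_pos (fun s hs => mul_pos two_pos (hw s hs)) hSne).ne'
  have hB_pos : 0 < k * Bt := Nat.mul_pos hk (hS Bt hBS).1
  exact hgswt_minimum_sampling_sparsity_general (fun s hs => (hS s hs).1) hd hBmax
    (fun i hi _ => funext fun j => by rw [hW', if_neg (by omega)]) (by omega) hx
end

section
/- Let N ≥ 1 and let Q ∈ ℝ^{N×N} be the DCT-III matrix with entries Q_{m,n} = c(m)·√(2/N)·cos(πm(n+1/2)/N) for 0 ≤ m,n ≤ N−1, where c(0) = 1/√2 and c(m) = 1 for m ≥ 1 (Q is the graph Fourier transform basis of the unweighted path graph on N vertices). Let K, M be natural numbers with 4K ≤ M ≤ N. If x, x′ ∈ ℂ^N each have at most K nonzero entries and (Qx)_m = (Qx′)_m for every 0 ≤ m ≤ M−1, then x = x′; that is, a K-sparse graph signal on the path graph can be perfectly reconstructed from the first M ≥ 4K entries of its GFT (DCT) representation. -/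
/-!
The `(m, n)` entry of the DCT-III matrix is a nonzero multiple, depending only on `m`, of the
Chebyshev polynomial `T_m` evaluated at a node `v_n`, and the nodes are distinct. Since
`T_0, …, T_{M-1}` span the polynomials of degree less than `M`, a signal `y` whose first `M` DCT
coefficients vanish satisfies `∑ n, p(v_n) y_n = 0` for every such `p`. If `y` has at most `M`
nonzero entries, the Lagrange basis polynomials of its support are admissible choices of `p`, and
they isolate each entry of `y`. Two `K`-sparse signals differ in at most `2K` entries, so `M ≥ 2K`
coefficients are enough to separate them.
-/

theorem hammingDist_le_hammingNorm_add_hammingNorm {ι : Type*} [Fintype ι] {β : ι → Type*}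
    [∀ i, DecidableEq (β i)] [∀ i, Zero (β i)] (x y : ∀ i, β i) :
    hammingDist x y ≤ hammingNorm x + hammingNorm y := by
  simpa only [hammingDist_zero_right] using hammingDist_triangle_right x y 0

section PolynomialMoments

open Polynomial

variable {ι R E : Type*} [Fintype ι]

theorem sum_eval_smul_eq_zero_of_degree_lt [CommRing R] [AddCommGroup E] [Module R E]
    {S : Polynomial.Sequence R} {M : ℕ} (hS : ∀ m < M, IsUnit (S m).leadingCoeff)
    {v : ι → R} {y : ι → E} (hy : ∀ m < M, ∑ i, (S m).eval (v i) • y i = 0)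
    {p : R[X]} (hp : p.degree < M) : ∑ i, p.eval (v i) • y i = 0 := by
  rw [← mem_degreeLT, ← S.span_degreeLT hS] at hp
  induction hp using Submodule.span_induction with
  | mem q hq =>
    obtain ⟨m, hm, rfl⟩ := hq
    exact hy m hm
  | zero => simp only [eval_zero, zero_smul, Finset.sum_const_zero]
  | add q r _ _ hq hr => simp only [eval_add, add_smul, Finset.sum_add_distrib, hq, hr, add_zero]
  | smul a q _ hq => simp only [eval_smul, smul_assoc, ← Finset.smul_sum, hq, smul_zero]

theorem eq_zero_of_sum_eval_smul_eq_zero [Field R] [AddCommGroup E] [Module R E] [DecidableEq E]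
    (S : Polynomial.Sequence R) {v : ι → R} (hv : Function.Injective v) {y : ι → E} {M : ℕ}
    (hyM : hammingNorm y ≤ M) (hy : ∀ m < M, ∑ i, (S m).eval (v i) • y i = 0) : y = 0 := by
  classical
  funext i
  by_contra hi
  let s : Finset ι := {j | y j ≠ 0}
  have his : i ∈ s := Finset.mem_filter.mpr ⟨Finset.mem_univ i, hi⟩
  have hdeg : (Lagrange.basis s v i).degree < M := by
    rw [Lagrange.degree_basis hv.injOn his, Nat.cast_lt]
    exact (Nat.sub_one_lt_of_lt (Finset.card_pos.mpr ⟨i, his⟩)).trans_le hyM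
  have hunit : ∀ m < M, IsUnit (S m).leadingCoeff := fun m _ =>
    (leadingCoeff_ne_zero.mpr (S.ne_zero m)).isUnit
  have hisolate : ∑ j, (Lagrange.basis s v i).eval (v j) • y j = y i := by
    rw [Finset.sum_eq_single i _ (by simp), Lagrange.eval_basis_self hv.injOn his, one_smul]
    intro j _ hji
    by_cases hj : y j = 0
    · rw [hj, smul_zero]
    · rw [Lagrange.eval_basis_of_ne hji.symm (by simp [s, hj]), zero_smul]
  exact hi (hisolate.symm.trans (sum_eval_smul_eq_zero_of_degree_lt hunit hy hdeg))

end PolynomialMoments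

section ChebyshevNodes

open Polynomial.Chebyshev

/-- The Chebyshev nodes of order `N`, i.e. the roots of `T_N`, written as in
`Polynomial.Chebyshev.roots_T_real`. -/
noncomputable def chebyshevNode (N : ℕ) (n : Fin N) : ℝ :=
  Real.cos ((2 * (n : ℕ) + 1) * Real.pi / (2 * N))

theorem chebyshevNode_injective (N : ℕ) : Function.Injective (chebyshevNode N) := fun a b hab =>
  Fin.ext ((Finset.range N).nodup_map_iff_injOn.mp (roots_T_real_nodup N)
    (Finset.mem_range.mpr a.isLt) (Finset.mem_range.mpr b.isLt) hab)

theorem eval_T_chebyshevNode (m : ℤ) {N : ℕ} (n : Fin N) :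
    (T ℝ m).eval (chebyshevNode N n) = Real.cos (Real.pi * m * ((n : ℕ) + 1 / 2) / N) := by
  rw [chebyshevNode, T_real_cos]
  ring_nf

end ChebyshevNodes

section DCT

open Polynomial.Chebyshev

/-- The normalization `c(m) √(2/N)` that makes the rows of the DCT-III matrix orthonormal. -/
noncomputable def dctScale (N m : ℕ) : ℝ :=
  (if m = 0 then 1 / Real.sqrt 2 else 1) * Real.sqrt (2 / N)

/-- The DCT-III matrix of order `N`, with frequencies indexing the rows and vertices of the path
the columns. -/
noncomputable def dctMatrix (N : ℕ) : Matrix (Fin N) (Fin N) ℝ := Matrix.of fun m n =>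
  dctScale N m * Real.cos (Real.pi * (m : ℕ) * ((n : ℕ) + 1 / 2) / N)

theorem dctScale_pos {N : ℕ} (hN : 0 < N) (m : ℕ) : 0 < dctScale N m := by
  unfold dctScale
  split_ifs <;> positivity

theorem dctMatrix_apply_eq_dctScale_mul_eval_T {N : ℕ} (m n : Fin N) :
    dctMatrix N m n = dctScale N m * (T ℝ (m : ℕ)).eval (chebyshevNode N n) := by
  rw [eval_T_chebyshevNode, Int.cast_natCast, dctMatrix, Matrix.of_apply]

theorem dct_sparse_recovery_general {E : Type*} [AddCommGroup E] [Module ℝ E] [DecidableEq E]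
    {N M : ℕ} {x x' : Fin N → E} (hxx' : hammingDist x x' ≤ M)
    (hsamp : ∀ m : Fin N, (m : ℕ) < M →
      ∑ n, dctMatrix N m n • x n = ∑ n, dctMatrix N m n • x' n) :
    x = x' := by
  have hdiff : hammingNorm (x - x') ≤ min M N := by
    rw [sub_eq_neg_add, ← hammingDist_eq_hammingNorm, hammingDist_comm]
    exact le_min hxx' (hammingDist_le_card_fintype.trans_eq (Fintype.card_fin N))
  refine sub_eq_zero.mp (eq_zero_of_sum_eval_smul_eq_zero (chebyshevTsequence ℝ)
    (chebyshevNode_injective N) hdiff fun m hm => ?_)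
  obtain ⟨hmM, hmN⟩ := lt_min_iff.mp hm
  have hker : ∑ n, dctMatrix N ⟨m, hmN⟩ n • (x - x') n = 0 := by
    simp only [Pi.sub_apply, smul_sub, Finset.sum_sub_distrib, hsamp ⟨m, hmN⟩ hmM, sub_self]
  simp only [dctMatrix_apply_eq_dctScale_mul_eval_T, mul_smul, ← Finset.smul_sum] at hker
  exact (smul_eq_zero.mp hker).resolve_left (dctScale_pos (Nat.zero_lt_of_lt hmN) m).ne'

end DCT

/-- a K-sparse signal on the path graph is determined by the first
`M ≥ 4K` entries of its GFT (DCT-III) representation. -/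
theorem dct_sparse_recovery (N : ℕ) (hN : 1 ≤ N)
    (Q : Matrix (Fin N) (Fin N) ℝ)
    (hQ : ∀ m n : Fin N, Q m n =
      (if (m : ℕ) = 0 then 1 / Real.sqrt 2 else 1) * Real.sqrt (2 / N) *
        Real.cos (Real.pi * (m : ℕ) * ((n : ℕ) + 1 / 2) / N))
    (K M : ℕ) (hKM : 4 * K ≤ M) (hMN : M ≤ N)
    (x x' : Fin N → ℂ)
    (hx : (Finset.univ.filter fun i => x i ≠ 0).card ≤ K)
    (hx' : (Finset.univ.filter fun i => x' i ≠ 0).card ≤ K)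
    (hsamp : ∀ m : Fin N, (m : ℕ) < M →
      (Q.map Complex.ofReal).mulVec x m = (Q.map Complex.ofReal).mulVec x' m) :
    x = x' := by
  obtain rfl : Q = dctMatrix N := Matrix.ext hQ
  have hdist := (hammingDist_le_hammingNorm_add_hammingNorm x x').trans (add_le_add hx hx')
  exact dct_sparse_recovery_general (hdist.trans (by omega : K + K ≤ M))
    (by simpa [Matrix.mulVec, dotProduct] using hsamp)
end

section
/- Let A ∈ ℝ^{N×N} be the adjacency matrix of the unweighted path graph on N ≥ 2 vertices, D its degree matrix, A_n = D^{−1/2} A D^{−1/2} the normalized adjacency matrix, and for k ≥ 1 let H_LP = (1/2^k)(I + A_n)^k and H_HP = (1/2^k)(I − A_n)^k. Then for every diagonal downsampling matrix K with diagonal entries in {+1,−1} having at least one entry equal to +1 (a node retaining the low-pass component) and at least one entry equal to −1 (the complementary set of nodes retaining the high-pass components), the one-level filterbank matrix W = (1/2)(I_N + K)·H_LP + (1/2)(I_N − K)·H_HP is invertible. -/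
/-!
Write `P = (1 + Aₙ) / 2` and `Q = (1 - Aₙ) / 2`, so that the two filters are `P ^ k` and `Q ^ k`
and `P + Q = 1`. Both matrices are positive semidefinite: up to a diagonal congruence they are
`D + A` and `D - A`, whose quadratic forms are weighted sums of `(x i ± x j) ^ 2`. If `W x = 0`,
then at every node `P ^ k x` or `Q ^ k x` vanishes, so
`0 = ⟪P ^ k x, Q ^ k x⟫ = ⟪x, (P Q) ^ k x⟫` and hence `P Q x = 0`. Thus `P x` lies in the kernel
of `Q`, and `P ^ k x = P x` is zero at a low-pass node. By connectedness a vector in the kernel of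
`Q` which is zero at one node is zero, so `P x = 0`. Symmetrically `Q x = 0`, and
`x = P x + Q x = 0`.
-/

open Matrix SimpleGraph

section ComplementaryFilters

variable {V : Type*} [Fintype V]

/-- The one-level filterbank matrix `W` with downsampling matrix `K`, low-pass filter `H₀` and
high-pass filter `H₁`. -/
def filterbank {R : Type*} [DivisionRing R] [DecidableEq V] (K H₀ H₁ : Matrix V V R) :
    Matrix V V R :=
  (1 / 2 : R) • ((1 + K) * H₀) + (1 / 2 : R) • ((1 - K) * H₁)

/-- Every nonzero vector in the kernel of `M` is nowhere zero, stated contrapositively: a kernel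
vector with one zero entry is zero. Connectedness of the graph gives this for both filters. -/
def NowhereZeroKernel {R : Type*} [NonUnitalNonAssocSemiring R] (M : Matrix V V R) : Prop :=
  ∀ ⦃v : V → R⦄, M *ᵥ v = 0 → ∀ ⦃a : V⦄, v a = 0 → v = 0

theorem NowhereZeroKernel.smul {R : Type*} [Ring R] [NoZeroDivisors R] {M : Matrix V V R}
    (hM : NowhereZeroKernel M) {c : R} (hc : c ≠ 0) : NowhereZeroKernel (c • M) := by
  intro v hv
  rw [smul_mulVec] at hv
  exact hM ((smul_eq_zero.1 hv).resolve_left hc)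

variable [DecidableEq V]

theorem NowhereZeroKernel.diagonal_mul_mul_diagonal {R : Type*} [CommSemiring R] [NoZeroDivisors R]
    {M : Matrix V V R} (hM : NowhereZeroKernel M) {d : V → R} (hd : ∀ a, d a ≠ 0) :
    NowhereZeroKernel (diagonal d * M * diagonal d) := by
  have hinj {v : V → R} (hv : diagonal d *ᵥ v = 0) : v = 0 := by
    funext a
    have hva := congrFun hv a
    rw [mulVec_diagonal] at hva
    exact (mul_eq_zero.1 hva).resolve_left (hd a)
  intro v hv a ha
  rw [mul_assoc, ← mulVec_mulVec, ← mulVec_mulVec] at hv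
  exact hinj (hM (hinj hv) (a := a) (by rw [mulVec_diagonal, ha, mul_zero]))

theorem filterbank_mulVec_apply {R : Type*} [Field R] {K : Matrix V V R} (hK : K.IsDiag)
    (H₀ H₁ : Matrix V V R) (x : V → R) (a : V) :
    (filterbank K H₀ H₁ *ᵥ x) a =
      (1 + K a a) / 2 * (H₀ *ᵥ x) a + (1 - K a a) / 2 * (H₁ *ᵥ x) a := by
  obtain ⟨d, rfl⟩ : ∃ d, K = diagonal d := ⟨_, hK.diagonal_diag.symm⟩
  simp only [filterbank, add_mulVec, sub_mulVec, smul_mulVec, ← mulVec_mulVec, one_mulVec,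
    Pi.add_apply, Pi.sub_apply, Pi.smul_apply, mulVec_diagonal, smul_eq_mul, diagonal_apply_eq]
  ring

theorem mulVec_eq_zero_of_pow_mulVec_eq_zero {R : Type*} [Ring R] [PartialOrder R] [StarRing R]
    [StarOrderedRing R] [NoZeroDivisors R] {M : Matrix V V R} (hM : M.IsHermitian) {x : V → R}
    {k : ℕ} (h : M ^ k *ᵥ x = 0) : M *ᵥ x = 0 := by
  induction k using Nat.twoStepInduction with
  | zero => rw [← one_mulVec x, ← pow_zero M, h, mulVec_zero]
  | one => rwa [pow_one] at h
  | more k _ ih =>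
    have hpow : (M ^ (k + 1))ᴴ * M ^ (k + 1) = M ^ k * M ^ (k + 2) := by
      rw [(hM.pow (k + 1)).eq, ← pow_add, ← pow_add]
      congr 1
      omega
    apply ih
    rw [← conjTranspose_mul_self_mulVec_eq_zero, hpow, ← mulVec_mulVec, h, mulVec_zero]

theorem commute_of_add_eq_one {R : Type*} [Ring R] {p q : R} (h : p + q = 1) : Commute p q := by
  rw [eq_sub_iff_add_eq'.2 h]
  exact (Commute.one_right p).sub_right (Commute.refl p)

theorem posSemidef_mul_of_add_eq_one {R : Type*} [CommRing R] [PartialOrder R] [StarRing R]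
    [StarOrderedRing R] {P Q : Matrix V V R} (hP : P.PosSemidef) (hQ : Q.PosSemidef)
    (h : P + Q = 1) : (P * Q).PosSemidef := by
  have hsplit : P * Q = P * Q * Pᴴ + Q * P * Qᴴ := by
    rw [hP.isHermitian.eq, hQ.isHermitian.eq, ← (commute_of_add_eq_one h).eq, ← mul_add, h, mul_one]
  rw [hsplit]
  exact (hQ.mul_mul_conjTranspose_same P).add (hP.mul_mul_conjTranspose_same Q)

theorem pow_mulVec_eq_mulVec {R : Type*} [Ring R] {P Q : Matrix V V R} (h : P + Q = 1) {x : V → R}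
    (hx : (P * Q) *ᵥ x = 0) {k : ℕ} (hk : k ≠ 0) : P ^ k *ᵥ x = P *ᵥ x := by
  have hsq : (P * P) *ᵥ x = P *ᵥ x := by
    rw [← add_zero ((P * P) *ᵥ x), ← hx, ← add_mulVec, ← mul_add, h, mul_one]
  induction k, Nat.one_le_iff_ne_zero.2 hk using Nat.le_induction with
  | base => rw [pow_one]
  | succ k hk ih => rw [pow_succ', ← mulVec_mulVec, ih (by omega), mulVec_mulVec, hsq]

theorem mulVec_eq_zero_of_pow_mulVec_apply_eq_zero {R : Type*} [Ring R] {P Q : Matrix V V R}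
    (h : P + Q = 1) (hQ : NowhereZeroKernel Q) {x : V → R} (hx : (P * Q) *ᵥ x = 0) {k : ℕ}
    (hk : k ≠ 0) {a : V} (ha : (P ^ k *ᵥ x) a = 0) : P *ᵥ x = 0 := by
  refine hQ (a := a) ?_ ?_
  · rw [mulVec_mulVec, ← (commute_of_add_eq_one h).eq, hx]
  · rw [← pow_mulVec_eq_mulVec h hx hk, ha]

open scoped ComplexOrder

variable {𝕜 : Type*} [RCLike 𝕜] {P Q : Matrix V V 𝕜}

theorem mul_mulVec_eq_zero_of_forall_pow_mulVec_apply_eq_zero_or (hP : P.PosSemidef)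
    (hQ : Q.PosSemidef) (h : P + Q = 1) {k : ℕ} {x : V → 𝕜}
    (hx : ∀ a, (P ^ k *ᵥ x) a = 0 ∨ (Q ^ k *ᵥ x) a = 0) : (P * Q) *ᵥ x = 0 := by
  have hPQ := posSemidef_mul_of_add_eq_one hP hQ h
  have horth : star (P ^ k *ᵥ x) ⬝ᵥ (Q ^ k *ᵥ x) = 0 :=
    Finset.sum_eq_zero fun a _ => by rcases hx a with ha | ha <;> simp [ha]
  have hform : star x ⬝ᵥ ((P * Q) ^ k *ᵥ x) = 0 := by
    rwa [(commute_of_add_eq_one h).mul_pow, ← mulVec_mulVec, dotProduct_mulVec,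
      ← (hP.isHermitian.pow k).eq, ← star_mulVec]
  exact mulVec_eq_zero_of_pow_mulVec_eq_zero hPQ.isHermitian
    (((hPQ.pow k).dotProduct_mulVec_zero_iff x).1 hform)

theorem eq_zero_of_forall_pow_mulVec_apply_eq_zero_or (hP : P.PosSemidef) (hQ : Q.PosSemidef)
    (h : P + Q = 1) (hPker : NowhereZeroKernel P) (hQker : NowhereZeroKernel Q) {k : ℕ} {x : V → 𝕜}
    (hx : ∀ a, (P ^ k *ᵥ x) a = 0 ∨ (Q ^ k *ᵥ x) a = 0) (hlow : ∃ a, (P ^ k *ᵥ x) a = 0)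
    (hhigh : ∃ a, (Q ^ k *ᵥ x) a = 0) : x = 0 := by
  rcases eq_or_ne k 0 with rfl | hk
  · exact funext fun a => by simpa using hx a
  have hPQx := mul_mulVec_eq_zero_of_forall_pow_mulVec_apply_eq_zero_or hP hQ h hx
  obtain ⟨a, ha⟩ := hlow
  obtain ⟨b, hb⟩ := hhigh
  have hPx : P *ᵥ x = 0 := mulVec_eq_zero_of_pow_mulVec_apply_eq_zero h hQker hPQx hk ha
  have hQx : Q *ᵥ x = 0 := by
    rw [(commute_of_add_eq_one h).eq] at hPQx
    exact mulVec_eq_zero_of_pow_mulVec_apply_eq_zero ((add_comm Q P).trans h) hPker hPQx hk hb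
  rw [← one_mulVec x, ← h, add_mulVec, hPx, hQx, add_zero]

theorem isUnit_filterbank_pow (hP : P.PosSemidef) (hQ : Q.PosSemidef) (h : P + Q = 1)
    (hPker : NowhereZeroKernel P) (hQker : NowhereZeroKernel Q) (k : ℕ) {K : Matrix V V 𝕜}
    (hK : K.IsDiag) (hKpm : ∀ a, K a a = 1 ∨ K a a = -1) (hKlp : ∃ a, K a a = 1)
    (hKhp : ∃ a, K a a = -1) : IsUnit (filterbank K (P ^ k) (Q ^ k)) := by
  refine mulVec_injective_iff_isUnit.1 <|
    (injective_iff_map_eq_zero (filterbank K (P ^ k) (Q ^ k)).mulVecLin).2 fun x hx => ?_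
  have hrow (a : V) :
      (1 + K a a) / 2 * (P ^ k *ᵥ x) a + (1 - K a a) / 2 * (Q ^ k *ᵥ x) a = 0 :=
    (filterbank_mulVec_apply hK _ _ x a).symm.trans (congrFun hx a)
  have hlow (a : V) (ha : K a a = 1) : (P ^ k *ᵥ x) a = 0 := by
    simpa [ha] using hrow a
  have hhigh (a : V) (ha : K a a = -1) : (Q ^ k *ᵥ x) a = 0 := by
    simpa [ha, one_add_one_eq_two] using hrow a
  exact eq_zero_of_forall_pow_mulVec_apply_eq_zero_or hP hQ h hPker hQker
    (fun a => (hKpm a).imp (hlow a) (hhigh a)) (hKlp.imp hlow) (hKhp.imp hhigh)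

end ComplementaryFilters

section WeightedGraph

variable {V : Type*} [Fintype V]

/-- The weighted degree of a node of the graph with adjacency matrix `A`. -/
def weightedDeg (A : Matrix V V ℝ) (a : V) : ℝ :=
  ∑ b, A a b

theorem weightedDeg_pos [Nontrivial V] {A : Matrix V V ℝ} (hirr : A.IsIrreducible) (a : V) :
    0 < weightedDeg A a :=
  have ⟨b, hb⟩ := hirr.exists_pos a
  Finset.sum_pos' (fun c _ => hirr.nonneg a c) ⟨b, Finset.mem_univ b, hb⟩

variable [DecidableEq V]

/-- The matrix `D + ε A`, used for `ε = ± 1`: the Laplacian of the weighted graph for `ε = -1`, its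
signless Laplacian for `ε = 1`. -/
def signedLaplacian (A : Matrix V V ℝ) (ε : ℝ) : Matrix V V ℝ :=
  diagonal (weightedDeg A) + ε • A

/-- The matrix `D ^ (-1/2)`. At a node of degree zero its diagonal entry is the junk value `0`. -/
noncomputable def invSqrtDegMatrix (A : Matrix V V ℝ) : Matrix V V ℝ :=
  diagonal fun a => (√(weightedDeg A a))⁻¹

/-- The normalized adjacency matrix `Aₙ = D ^ (-1/2) A D ^ (-1/2)` of a weighted graph. -/
noncomputable def normalizedAdjacency (A : Matrix V V ℝ) : Matrix V V ℝ :=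
  invSqrtDegMatrix A * A * invSqrtDegMatrix A

/-- The filter `(1 + ε Aₙ) / 2`, used for `ε = ± 1`: the HGSWT low-pass filter of order two for
`ε = 1`, the high-pass one for `ε = -1`. -/
noncomputable def orderTwoFilter (A : Matrix V V ℝ) (ε : ℝ) : Matrix V V ℝ :=
  (1 / 2 : ℝ) • (1 + ε • normalizedAdjacency A)

variable {A : Matrix V V ℝ} {ε : ℝ}

theorem dotProduct_signedLaplacian_mulVec (hA : A.IsSymm) (hε : ε ^ 2 = 1) (x : V → ℝ) :
    x ⬝ᵥ (signedLaplacian A ε *ᵥ x) = (∑ a, ∑ b, A a b * (x a + ε * x b) ^ 2) / 2 := by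
  have hform : x ⬝ᵥ (signedLaplacian A ε *ᵥ x) =
      ∑ a, ∑ b, A a b * (x a ^ 2 + ε * (x a * x b)) := by
    simp only [signedLaplacian, add_mulVec, smul_mulVec, dotProduct, Pi.add_apply, Pi.smul_apply,
      mulVec_diagonal, smul_eq_mul]
    simp only [weightedDeg, mulVec, dotProduct, Finset.sum_mul, Finset.mul_sum,
      ← Finset.sum_add_distrib]
    exact Finset.sum_congr rfl fun a _ => Finset.sum_congr rfl fun b _ => by ring
  have hswap : ∑ a, ∑ b, A a b * (x a ^ 2 + ε * (x a * x b)) =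
      ∑ a, ∑ b, A a b * (x b ^ 2 + ε * (x a * x b)) := by
    rw [Finset.sum_comm]
    exact Finset.sum_congr rfl fun a _ => Finset.sum_congr rfl fun b _ => by
      rw [hA.apply a b, mul_comm (x b)]
  rw [hform, eq_div_iff two_ne_zero, mul_two]
  nth_rewrite 2 [hswap]
  simp only [← Finset.sum_add_distrib]
  exact Finset.sum_congr rfl fun a _ => Finset.sum_congr rfl fun b _ => by
    linear_combination (-A a b * x b ^ 2) * hε

theorem posSemidef_signedLaplacian (hA : A.IsSymm) (hnonneg : ∀ a b, 0 ≤ A a b)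
    (hε : ε ^ 2 = 1) : (signedLaplacian A ε).PosSemidef := by
  refine .of_dotProduct_mulVec_nonneg ?_ fun x => ?_
  · exact (isSymm_diagonal _).add (hA.smul ε)
  · rw [star_trivial, dotProduct_signedLaplacian_mulVec hA hε]
    exact div_nonneg (Finset.sum_nonneg fun a _ => Finset.sum_nonneg fun b _ =>
      mul_nonneg (hnonneg a b) (sq_nonneg _)) zero_le_two

theorem add_mul_eq_zero_of_signedLaplacian_mulVec_eq_zero (hA : A.IsSymm)
    (hnonneg : ∀ a b, 0 ≤ A a b) (hε : ε ^ 2 = 1) {x : V → ℝ}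
    (hx : signedLaplacian A ε *ᵥ x = 0) {a b : V} (hab : 0 < A a b) : x a + ε * x b = 0 := by
  have hterm (c d : V) : 0 ≤ A c d * (x c + ε * x d) ^ 2 :=
    mul_nonneg (hnonneg c d) (sq_nonneg _)
  have hsum : ∑ c, ∑ d, A c d * (x c + ε * x d) ^ 2 = 0 := by
    have h := dotProduct_signedLaplacian_mulVec hA hε x
    rw [hx, dotProduct_zero] at h
    linarith
  rw [Fintype.sum_eq_zero_iff_of_nonneg fun c => Finset.sum_nonneg fun d _ => hterm c d] at hsum
  have hrow := congrFun hsum a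
  dsimp only [Pi.zero_apply] at hrow
  rw [Fintype.sum_eq_zero_iff_of_nonneg (hterm a)] at hrow
  exact pow_eq_zero_iff two_ne_zero |>.1 <| (mul_eq_zero.1 (congrFun hrow b)).resolve_left hab.ne'

theorem nowhereZeroKernel_signedLaplacian (hA : A.IsSymm) (hirr : A.IsIrreducible)
    (hε : ε ^ 2 = 1) : NowhereZeroKernel (signedLaplacian A ε) := by
  intro x hx a ha
  ext b
  let : Quiver V := toQuiver A
  obtain ⟨p, -⟩ := hirr.connected a b
  induction p with
  | nil => exact ha
  | @cons c d _ e ih =>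
    have hcd := add_mul_eq_zero_of_signedLaplacian_mulVec_eq_zero hA hirr.nonneg hε hx e.down
    have hε0 : ε ≠ 0 := by rintro rfl; norm_num at hε
    simpa [show x c = 0 from ih, hε0] using hcd

theorem one_add_smul_normalizedAdjacency (hdeg : ∀ a, 0 < weightedDeg A a) (ε : ℝ) :
    1 + ε • normalizedAdjacency A =
      invSqrtDegMatrix A * signedLaplacian A ε * invSqrtDegMatrix A := by
  have hD : invSqrtDegMatrix A * diagonal (weightedDeg A) * invSqrtDegMatrix A = 1 := by
    rw [invSqrtDegMatrix, diagonal_mul_diagonal, diagonal_mul_diagonal, ← diagonal_one]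
    congr 1
    funext a
    have hsqrt : √(weightedDeg A a) ≠ 0 := (Real.sqrt_pos.2 (hdeg a)).ne'
    field_simp
    exact (Real.sq_sqrt (hdeg a).le).symm
  rw [signedLaplacian, mul_add, add_mul, hD, normalizedAdjacency, Matrix.mul_smul, Matrix.smul_mul]

theorem posSemidef_orderTwoFilter (hA : A.IsSymm) (hnonneg : ∀ a b, 0 ≤ A a b)
    (hdeg : ∀ a, 0 < weightedDeg A a) (hε : ε ^ 2 = 1) : (orderTwoFilter A ε).PosSemidef := by
  have hS : (invSqrtDegMatrix A)ᴴ = invSqrtDegMatrix A := by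
    rw [invSqrtDegMatrix, diagonal_conjTranspose, star_trivial]
  have hcongr := (posSemidef_signedLaplacian hA hnonneg hε).mul_mul_conjTranspose_same
    (invSqrtDegMatrix A)
  rw [hS, ← one_add_smul_normalizedAdjacency hdeg] at hcongr
  exact hcongr.smul (by norm_num)

theorem nowhereZeroKernel_orderTwoFilter (hA : A.IsSymm) (hirr : A.IsIrreducible)
    (hdeg : ∀ a, 0 < weightedDeg A a) (hε : ε ^ 2 = 1) :
    NowhereZeroKernel (orderTwoFilter A ε) := by
  rw [orderTwoFilter, one_add_smul_normalizedAdjacency hdeg, invSqrtDegMatrix]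
  refine ((nowhereZeroKernel_signedLaplacian hA hirr hε).diagonal_mul_mul_diagonal
    fun a => ?_).smul one_half_pos.ne'
  exact inv_ne_zero (Real.sqrt_pos.2 (hdeg a)).ne'

theorem orderTwoFilter_one_add_orderTwoFilter_neg_one (A : Matrix V V ℝ) :
    orderTwoFilter A 1 + orderTwoFilter A (-1) = 1 := by
  simp only [orderTwoFilter]
  module

theorem orderTwoFilter_pow (A : Matrix V V ℝ) (ε : ℝ) (k : ℕ) :
    orderTwoFilter A ε ^ k = (1 / 2 ^ k : ℝ) • (1 + ε • normalizedAdjacency A) ^ k := by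
  rw [orderTwoFilter, smul_pow, _root_.one_div_pow]

theorem path_hgswt_filterbank_invertible_general (hA : A.IsSymm) (hirr : A.IsIrreducible) (k : ℕ)
    {K : Matrix V V ℝ} (hK : K.IsDiag) (hKpm : ∀ a, K a a = 1 ∨ K a a = -1)
    (hKlp : ∃ a, K a a = 1) (hKhp : ∃ a, K a a = -1) :
    IsUnit (filterbank K ((1 / 2 ^ k : ℝ) • (1 + normalizedAdjacency A) ^ k)
      ((1 / 2 ^ k : ℝ) • (1 - normalizedAdjacency A) ^ k)) := by
  have ⟨a, ha⟩ := hKlp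
  have ⟨b, hb⟩ := hKhp
  have : Nontrivial V := ⟨a, b, fun hab => by norm_num [← hab, ha] at hb⟩
  have hdeg := weightedDeg_pos hirr
  have hpsd {ε : ℝ} (hε : ε ^ 2 = 1) := posSemidef_orderTwoFilter hA hirr.nonneg hdeg hε
  have hker {ε : ℝ} (hε : ε ^ 2 = 1) := nowhereZeroKernel_orderTwoFilter hA hirr hdeg hε
  have hlow := orderTwoFilter_pow A 1 k
  have hhigh := orderTwoFilter_pow A (-1) k
  rw [one_smul] at hlow
  rw [neg_one_smul, ← sub_eq_add_neg] at hhigh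
  rw [← hlow, ← hhigh]
  exact isUnit_filterbank_pow (hpsd (one_pow 2)) (hpsd neg_one_sq)
    (orderTwoFilter_one_add_orderTwoFilter_neg_one A) (hker (one_pow 2)) (hker neg_one_sq) k
    hK hKpm hKlp hKhp

end WeightedGraph

section UnweightedGraph

theorem isIrreducible_adjMatrix {V : Type*} [Finite V] [Nontrivial V] {G : SimpleGraph V}
    [DecidableRel G.Adj] (hG : G.Preconnected) : (G.adjMatrix ℝ).IsIrreducible := by
  classical
  have := Fintype.ofFinite V
  have hnonneg (a b : V) : 0 ≤ G.adjMatrix ℝ a b := by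
    rw [adjMatrix_apply]
    split_ifs <;> norm_num
  rw [isIrreducible_iff_exists_pow_pos hnonneg]
  intro a b
  obtain ⟨c, hac⟩ := hG.exists_adj_of_nontrivial a
  obtain ⟨p⟩ := hG c b
  refine ⟨(Walk.cons hac p).length, Nat.succ_pos _, ?_⟩
  rw [adjMatrix_pow_apply_eq_card_walk, Nat.cast_pos, Fintype.card_pos_iff]
  exact ⟨⟨Walk.cons hac p, rfl⟩⟩

theorem weightedDeg_adjMatrix {V : Type*} [Fintype V] (G : SimpleGraph V) [DecidableRel G.Adj]
    (a : V) : weightedDeg (G.adjMatrix ℝ) a = G.degree a := by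
  simp only [weightedDeg, adjMatrix_apply, degree_eq_sum_if_adj]

theorem degree_pathGraph {n : ℕ} (hn : 2 ≤ n) [DecidableRel (pathGraph n).Adj] (a : Fin n) :
    (pathGraph n).degree a = if (a : ℕ) = 0 ∨ (a : ℕ) = n - 1 then 1 else 2 := by
  rw [← card_neighborFinset_eq_degree]
  split_ifs with h
  · rw [Finset.card_eq_one]
    refine ⟨if (a : ℕ) = 0 then ⟨1, by omega⟩ else ⟨n - 2, by omega⟩, ?_⟩
    ext b
    rw [mem_neighborFinset, pathGraph_adj, Finset.mem_singleton]
    split_ifs <;> rw [Fin.ext_iff] <;> dsimp only <;> omega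
  · rw [Finset.card_eq_two]
    refine ⟨⟨a - 1, by omega⟩, ⟨a + 1, by omega⟩, by simp only [ne_eq, Fin.mk.injEq]; omega, ?_⟩
    ext b
    rw [mem_neighborFinset, pathGraph_adj, Finset.mem_insert, Finset.mem_singleton, Fin.ext_iff,
      Fin.ext_iff]
    dsimp only
    omega

theorem weightedDeg_adjMatrix_pathGraph {n : ℕ} (hn : 2 ≤ n) [DecidableRel (pathGraph n).Adj]
    (a : Fin n) : weightedDeg ((pathGraph n).adjMatrix ℝ) a =
      if (a : ℕ) = 0 ∨ (a : ℕ) = n - 1 then 1 else 2 := by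
  rw [weightedDeg_adjMatrix, degree_pathGraph hn, Nat.cast_ite, Nat.cast_one, Nat.cast_ofNat]

end UnweightedGraph

/-- the one-level path-graph HGSWT filterbank (built from the normalized
adjacency matrix) is invertible for any downsampling pattern with at least one low-pass
node and at least one high-pass node. -/
theorem path_hgswt_filterbank_invertible
    (N : ℕ) (hN : 2 ≤ N) (k : ℕ) (hk : 1 ≤ k)
    (A : Matrix (Fin N) (Fin N) ℝ)
    (hA : ∀ a b : Fin N, A a b = if (a : ℕ) + 1 = (b : ℕ) ∨ (b : ℕ) + 1 = (a : ℕ) then 1 else 0)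
    (deg : Fin N → ℝ)
    (hdeg : ∀ a : Fin N, deg a = if (a : ℕ) = 0 ∨ (a : ℕ) = N - 1 then 1 else 2)
    (An : Matrix (Fin N) (Fin N) ℝ)
    (hAn : An = Matrix.diagonal (fun a => (Real.sqrt (deg a))⁻¹) * A *
      Matrix.diagonal (fun a => (Real.sqrt (deg a))⁻¹))
    (HLP HHP : Matrix (Fin N) (Fin N) ℝ)
    (hHLP : HLP = (1 / 2 ^ k : ℝ) • ((1 : Matrix (Fin N) (Fin N) ℝ) + An) ^ k)
    (hHHP : HHP = (1 / 2 ^ k : ℝ) • ((1 : Matrix (Fin N) (Fin N) ℝ) - An) ^ k)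
    (K : Matrix (Fin N) (Fin N) ℝ)
    (hKdiag : ∀ a b : Fin N, a ≠ b → K a b = 0)
    (hKpm : ∀ a : Fin N, K a a = 1 ∨ K a a = -1)
    (hKlp : ∃ a : Fin N, K a a = 1)
    (hKhp : ∃ a : Fin N, K a a = -1)
    (W : Matrix (Fin N) (Fin N) ℝ)
    (hW : W = (1 / 2 : ℝ) • ((1 + K) * HLP) + (1 / 2 : ℝ) • ((1 - K) * HHP)) :
    IsUnit W := by
  classical
  obtain rfl : A = (pathGraph N).adjMatrix ℝ := by
    ext a b
    simp only [hA, adjMatrix_apply, pathGraph_adj]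
  obtain rfl : deg = weightedDeg ((pathGraph N).adjMatrix ℝ) :=
    funext fun a => (hdeg a).trans (weightedDeg_adjMatrix_pathGraph hN a).symm
  have : Nontrivial (Fin N) := Fin.nontrivial_iff_two_le.2 hN
  subst hAn hHLP hHHP hW
  exact path_hgswt_filterbank_invertible_general (isSymm_adjMatrix _)
    (isIrreducible_adjMatrix (pathGraph_preconnected N)) k (fun _ _ => hKdiag _ _) hKpm hKlp hKhp
end

section
/- For i = 1, 2 let F^{(i)} ∈ ℂ^{N_i×N_i} be the DFT matrix of dimension N_i, and let F^{(i)}_{M_i} denote its first M_i rows, where K_i, M_i satisfy 2K_i ≤ M_i ≤ N_i. Let x_i, x_i′ ∈ ℂ^{N_i} each have at most K_i nonzero entries. If the Kronecker products of the sampled spectral representations coincide, (F^{(1)}_{M_1} x_1) ⊗ (F^{(2)}_{M_2} x_2) = (F^{(1)}_{M_1} x_1′) ⊗ (F^{(2)}_{M_2} x_2′), then x_1 ⊗ x_2 = x_1′ ⊗ x_2′; that is, a multi-dimensional K_1K_2-sparse graph signal x = x_1 ⊗ x_2 on a product of circulant graphs is perfectly determined by the tensor product y = y_1 ⊗ y_2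 of the dimensionality-reduced GFT representations y_i = F^{(i)}_{M_i} x_i with M_i ≥ 2K_i. -/
/-! For distinct nodes `v i`, the moments `∑ i, z i * v i ^ m` with `m < M` determine
`∑ i, z i * p (v i)` for every polynomial `p` of degree less than `M`. If they vanish and `z` has at
most `M` nonzero entries, choosing `p` to vanish at all nodes of the support but one kills the
remaining entry. So the first `M` rows of the DFT matrix annihilate no nonzero `M`-sparse vector.

The factors of `y₁ ⊗ y₂` are only determined up to reciprocal scalars, so the factors are not
recovered one at a time. Instead, fixing a coordinate of `y₂` and `y₂'` in `y₁ ⊗ y₂ = y₁' ⊗ y₂'`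
says that multiples of `y₁` and `y₁'` agree; the difference of the same multiples of `x₁` and `x₁'`
is `2K₁`-sparse, hence zero. This replaces `y₁, y₁'` by `x₁, x₁'`, and repeating it in the other
factor gives the result. -/

theorem hammingNorm_sub_le {ι : Type*} {β : ι → Type*} [Fintype ι] [∀ i, DecidableEq (β i)]
    [∀ i, AddCommGroup (β i)] (x y : ∀ i, β i) :
    hammingNorm (x - y) ≤ hammingNorm x + hammingNorm y := by
  calc hammingNorm (x - y)
      = hammingDist y x := by rw [hammingDist_eq_hammingNorm, neg_add_eq_sub]
    _ ≤ hammingDist x 0 + hammingDist y 0 := by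
        rw [add_comm, ← hammingDist_comm 0 x]
        exact hammingDist_triangle y 0 x
    _ = hammingNorm x + hammingNorm y := by rw [hammingDist_zero_right, hammingDist_zero_right]

section Spark

open Matrix

variable {R m n : Type*} [DecidableEq R] [Fintype n]

/-- `SparkGT A k` says that the spark of the matrix `A`, the least number of linearly dependent
columns, is greater than `k`. It is encoded as: the only vector with at most `k` nonzero entries in
the kernel of `A` is zero. This is what makes sparse vectors recoverable from `A *ᵥ x`. -/
def SparkGT [Semiring R] (A : Matrix m n R) (k : ℕ) : Prop :=
  ∀ ⦃z : n → R⦄, hammingNorm z ≤ k → A *ᵥ z = 0 → z = 0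

namespace SparkGT

theorem smul [Semiring R] [NoZeroDivisors R] {A : Matrix m n R} {k : ℕ} (hA : SparkGT A k) {c : R}
    (hc : c ≠ 0) : SparkGT (c • A) k := by
  intro z hz hAz
  rw [smul_mulVec] at hAz
  exact hA hz (funext fun i => (mul_eq_zero.1 (congrFun hAz i)).resolve_left hc)

theorem smul_eq_smul_of_mulVec [CommRing R] {A : Matrix m n R} {k : ℕ} (hA : SparkGT A k)
    {x x' : n → R} (hx : hammingNorm x + hammingNorm x' ≤ k) {a b : R}
    (h : a • A *ᵥ x = b • A *ᵥ x') : a • x = b • x' := by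
  have sparse_difference : hammingNorm (a • x - b • x') ≤ k :=
    calc hammingNorm (a • x - b • x')
        ≤ hammingNorm (a • x) + hammingNorm (b • x') := hammingNorm_sub_le _ _
      _ ≤ hammingNorm x + hammingNorm x' :=
          add_le_add (hammingNorm_smul_le_hammingNorm (β := fun _ => R))
            (hammingNorm_smul_le_hammingNorm (β := fun _ => R))
      _ ≤ k := hx
  refine sub_eq_zero.1 (hA sparse_difference ?_)
  rw [mulVec_sub, mulVec_smul, mulVec_smul, h, sub_self]

end SparkGT

theorem kronecker_dft_sparse_recovery_general {p q : Type*} [CommRing R] [Fintype q]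
    {A : Matrix m n R} {B : Matrix p q R} {k l : ℕ}
    (hA : SparkGT A k) (hB : SparkGT B l) {x x' : n → R} {y y' : q → R}
    (hx : hammingNorm x + hammingNorm x' ≤ k) (hy : hammingNorm y + hammingNorm y' ≤ l)
    (h : ∀ i j, (A *ᵥ x) i * (B *ᵥ y) j = (A *ᵥ x') i * (B *ᵥ y') j) (i : n) (j : q) :
    x i * y j = x' i * y' j := by
  have recover_left (j : p) : (B *ᵥ y) j • x = (B *ᵥ y') j • x' :=
    hA.smul_eq_smul_of_mulVec hx <| funext fun i => by
      simpa only [Pi.smul_apply, smul_eq_mul, mul_comm] using h i j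
  have recover_right (i : n) : x i • y = x' i • y' :=
    hB.smul_eq_smul_of_mulVec hy <| funext fun j => by
      simpa only [Pi.smul_apply, smul_eq_mul, mul_comm] using congrFun (recover_left j) i
  exact congrFun (recover_right i) j

end Spark

section Vandermonde

open Matrix Polynomial

variable {ι R : Type*} [Fintype ι]

theorem sum_mul_eval_eq_zero_of_sum_mul_pow_eq_zero [CommSemiring R] {z v : ι → R} {M : ℕ}
    (h : ∀ m < M, ∑ i, z i * v i ^ m = 0) {p : R[X]} (hp : p.natDegree < M) :
    ∑ i, z i * p.eval (v i) = 0 := by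
  calc ∑ i, z i * p.eval (v i)
      = ∑ i, ∑ m ∈ Finset.range M, p.coeff m * (z i * v i ^ m) := by
        simp only [eval_eq_sum_range' hp, Finset.mul_sum, mul_left_comm]
    _ = ∑ m ∈ Finset.range M, p.coeff m * ∑ i, z i * v i ^ m := by
        rw [Finset.sum_comm]
        simp only [Finset.mul_sum]
    _ = 0 := Finset.sum_eq_zero fun m hm => by rw [h m (Finset.mem_range.1 hm), mul_zero]

theorem sparkGT_of_pow_of_injective [CommRing R] [IsDomain R] [DecidableEq R] {v : ι → R}
    (hv : Function.Injective v) (M : ℕ) :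
    SparkGT (of fun (m : Fin M) i => v i ^ (m : ℕ)) M := by
  classical
  intro z hz hker
  have moments (m : ℕ) (hm : m < M) : ∑ i, z i * v i ^ m = 0 := by
    simpa only [mulVec, dotProduct, of_apply, Pi.zero_apply, mul_comm] using congrFun hker ⟨m, hm⟩
  ext i
  by_contra hi
  let S : Finset ι := {j | z j ≠ 0}
  have hiS : i ∈ S := Finset.mem_filter_univ i |>.2 hi
  let P := Lagrange.nodal (S.erase i) v
  have natDegree_P_lt : P.natDegree < M := by
    rw [Lagrange.natDegree_nodal]
    exact (Finset.card_erase_lt_of_mem hiS).trans_le hz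
  have eval_P_ne_zero : P.eval (v i) ≠ 0 :=
    Lagrange.eval_nodal_not_at_node fun j hj => hv.ne (Finset.ne_of_mem_erase hj).symm
  have other_terms (j : ι) (hj : j ≠ i) : z j * P.eval (v j) = 0 := by
    by_cases hzj : z j = 0
    · rw [hzj, zero_mul]
    · rw [Lagrange.eval_nodal_at_node (Finset.mem_erase.2 ⟨hj, Finset.mem_filter_univ j |>.2 hzj⟩),
        mul_zero]
  have term_eq_zero : z i * P.eval (v i) = 0 := by
    rw [← Fintype.sum_eq_single i other_terms]
    exact sum_mul_eval_eq_zero_of_sum_mul_pow_eq_zero moments natDegree_P_lt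
  exact mul_ne_zero hi eval_P_ne_zero term_eq_zero

end Vandermonde

theorem exp_dft_eq_pow (N m n : ℕ) :
    Complex.exp (-2 * (Real.pi : ℂ) * Complex.I * (m : ℂ) * (n : ℂ) / (N : ℂ)) =
      ((Complex.exp (2 * Real.pi * Complex.I / N))⁻¹ ^ n) ^ m := by
  rw [← pow_mul, ← Complex.exp_neg, ← Complex.exp_nat_mul]
  congr 1
  push_cast
  ring

theorem sparkGT_submatrix_dft {N : ℕ} (hN : 1 ≤ N) {F : Matrix (Fin N) (Fin N) ℂ}
    (hF : ∀ m n : Fin N, F m n =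
      Complex.exp (-2 * (Real.pi : ℂ) * Complex.I * ((m : ℕ) : ℂ) * ((n : ℕ) : ℂ) / (N : ℂ))
        / ((Real.sqrt N : ℝ) : ℂ))
    {M : ℕ} (hMN : M ≤ N) : SparkGT (F.submatrix (Fin.castLE hMN) id) M := by
  have hN₀ : N ≠ 0 := Nat.one_le_iff_ne_zero.1 hN
  let node (n : Fin N) : ℂ := (Complex.exp (2 * Real.pi * Complex.I / N))⁻¹ ^ (n : ℕ)
  have node_injective : Function.Injective node := fun a b hab =>
    Fin.ext ((Complex.isPrimitiveRoot_exp N hN₀).inv.pow_inj a.isLt b.isLt hab)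
  have scale_ne_zero : ((Real.sqrt N : ℝ) : ℂ)⁻¹ ≠ 0 := by simpa using hN₀
  have submatrix_eq : F.submatrix (Fin.castLE hMN) id =
      ((Real.sqrt N : ℝ) : ℂ)⁻¹ • Matrix.of fun (m : Fin M) n => node n ^ (m : ℕ) := by
    ext m n
    rw [Matrix.submatrix_apply, hF, exp_dft_eq_pow, Matrix.smul_apply, Matrix.of_apply,
      smul_eq_mul, div_eq_inv_mul]
    rfl
  rw [submatrix_eq]
  exact (sparkGT_of_pow_of_injective node_injective M).smul scale_ne_zero

/-- a multi-dimensional `K₁K₂`-sparse signal `x = x₁ ⊗ x₂` on a product of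
circulant graphs is determined by the tensor product of the dimensionality-reduced GFT
(DFT) representations `y_i = F^{(i)}_{M_i} x_i` with `M_i ≥ 2K_i`. -/
theorem kronecker_dft_sparse_recovery
    (N1 N2 : ℕ) (hN1 : 1 ≤ N1) (hN2 : 1 ≤ N2)
    (F1 : Matrix (Fin N1) (Fin N1) ℂ) (F2 : Matrix (Fin N2) (Fin N2) ℂ)
    (hF1 : ∀ m n : Fin N1, F1 m n =
      Complex.exp (-2 * (Real.pi : ℂ) * Complex.I * ((m : ℕ) : ℂ) * ((n : ℕ) : ℂ) / (N1 : ℂ))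
        / ((Real.sqrt N1 : ℝ) : ℂ))
    (hF2 : ∀ m n : Fin N2, F2 m n =
      Complex.exp (-2 * (Real.pi : ℂ) * Complex.I * ((m : ℕ) : ℂ) * ((n : ℕ) : ℂ) / (N2 : ℂ))
        / ((Real.sqrt N2 : ℝ) : ℂ))
    (K1 M1 K2 M2 : ℕ) (hKM1 : 2 * K1 ≤ M1) (hMN1 : M1 ≤ N1)
    (hKM2 : 2 * K2 ≤ M2) (hMN2 : M2 ≤ N2)
    (x1 x1' : Fin N1 → ℂ) (x2 x2' : Fin N2 → ℂ)
    (hx1 : (Finset.univ.filter fun i => x1 i ≠ 0).card ≤ K1)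
    (hx1' : (Finset.univ.filter fun i => x1' i ≠ 0).card ≤ K1)
    (hx2 : (Finset.univ.filter fun i => x2 i ≠ 0).card ≤ K2)
    (hx2' : (Finset.univ.filter fun i => x2' i ≠ 0).card ≤ K2)
    (hsamp : ∀ (m1 : Fin N1) (m2 : Fin N2), (m1 : ℕ) < M1 → (m2 : ℕ) < M2 →
      F1.mulVec x1 m1 * F2.mulVec x2 m2 = F1.mulVec x1' m1 * F2.mulVec x2' m2) :
    ∀ (n1 : Fin N1) (n2 : Fin N2), x1 n1 * x2 n2 = x1' n1 * x2' n2 :=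
  kronecker_dft_sparse_recovery_general
    (sparkGT_submatrix_dft hN1 hF1 hMN1) (sparkGT_submatrix_dft hN2 hF2 hMN2)
    ((add_le_add hx1 hx1').trans (by omega)) ((add_le_add hx2 hx2').trans (by omega))
    fun m1 m2 => hsamp _ _ m1.isLt m2.isLt
end
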